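/- The interval [0, d c⃗] in 𝕃 is finite, and its cardinality equals Σ_{I ⊆ {1,…,n}, |I| ≤ d} (d + 1 − |I|) · Π_{i ∈ I} (p_i − 1). -/

import Mathlib

/-- The subgroup of relations `p i • x⃗_i − c⃗` inside the free abelian group
`(Fin n → ℤ) × ℤ` on the generators `x⃗_1, …, x⃗_n, c⃗`. -/
def GLrels (n : ℕ) (p : Fin n → ℕ) : AddSubgroup ((Fin n → ℤ) × ℤ) :=
  AddSubgroup.closure (Set.range fun i : Fin n => ((Pi.single i (p i : ℤ), -1) : (Fin n → ℤ) × ℤ))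

/-- The grading group `𝕃 = ⟨x⃗_1, …, x⃗_n, c⃗⟩ / ⟨p_i x⃗_i − c⃗⟩`. -/
abbrev GLgroup (n : ℕ) (p : Fin n → ℕ) : Type :=
  ((Fin n → ℤ) × ℤ) ⧸ GLrels n p

/-- The generator `x⃗_i` of `𝕃`. -/
def GLx (n : ℕ) (p : Fin n → ℕ) (i : Fin n) : GLgroup n p :=
  QuotientAddGroup.mk (Pi.single i 1, 0)

/-- The generator `c⃗` of `𝕃`. -/
def GLc (n : ℕ) (p : Fin n → ℕ) : GLgroup n p :=
  QuotientAddGroup.mk (0, 1)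

/-- The positive cone `𝕃_+`: the submonoid of `𝕃` generated by `x⃗_1, …, x⃗_n` and `c⃗`. -/
def GLplus (n : ℕ) (p : Fin n → ℕ) : AddSubmonoid (GLgroup n p) :=
  AddSubmonoid.closure ({GLc n p} ∪ Set.range (GLx n p))

/-- The partial order relation on `𝕃`: `x⃗ ≤ y⃗` iff `y⃗ − x⃗ ∈ 𝕃_+`. -/
def GLle (n : ℕ) (p : Fin n → ℕ) (x y : GLgroup n p) : Prop :=
  y - x ∈ GLplus n p

theorem GLrels_mem {n : ℕ} {p : Fin n → ℕ} (w : (Fin n → ℤ) × ℤ) :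
    w ∈ GLrels n p ↔ ∃ k : Fin n → ℤ, (∀ i, w.1 i = p i * k i) ∧ w.2 = -∑ i, k i := by
  constructor
  · intro h
    unfold GLrels at h
    induction h using AddSubgroup.closure_induction with
    | mem x hx =>
      obtain ⟨i, rfl⟩ := hx
      refine ⟨Pi.single i 1, fun j => ?_, ?_⟩
      · by_cases h : j = i
        · subst h; simp
        · simp [h]
      · simp
    | zero => exact ⟨0, by simp, by simp⟩
    | add x y _ _ hx hy =>
      obtain ⟨k, h1, h2⟩ := hx
      obtain ⟨l, h3, h4⟩ := hy
      refine ⟨k + l, fun i => ?_, ?_⟩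
      · simp [h1, h3, mul_add]
      · simp [h2, h4, Finset.sum_add_distrib]; ring
    | neg x _ hx =>
      obtain ⟨k, h1, h2⟩ := hx
      exact ⟨-k, fun i => by simp [h1], by simp [h2]⟩
  · rintro ⟨k, h1, h2⟩
    have : w = ∑ i, k i • ((Pi.single i (p i : ℤ), -1) : (Fin n → ℤ) × ℤ) := by
      ext j
      · simp [Prod.fst_sum, Finset.sum_apply, h1, Pi.single_apply, mul_comm]
      · simp [Prod.snd_sum, h2]
    rw [this]
    exact AddSubgroup.sum_mem _ fun i _ => AddSubgroup.zsmul_mem _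
      (AddSubgroup.subset_closure (Set.mem_range_self i)) _

theorem GLmk_eq {n : ℕ} {p : Fin n → ℕ} (v w : Fin n → ℤ) (a b : ℤ) :
    (QuotientAddGroup.mk (v, a) : GLgroup n p) = QuotientAddGroup.mk (w, b) ↔
      ∃ k : Fin n → ℤ, (∀ i, w i = v i + p i * k i) ∧ b = a - ∑ i, k i := by
  rw [QuotientAddGroup.eq, GLrels_mem]
  refine exists_congr fun k => and_congr (forall_congr' fun i => ?_) ?_
  · simp; constructor <;> intro h <;> linarith
  · simp; constructor <;> intro h <;> linarith

theorem GLmk_mem {n : ℕ} {p : Fin n → ℕ} (v : Fin n → ℤ) (a : ℤ) (hv : ∀ i, 0 ≤ v i)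
    (ha : 0 ≤ a) : (QuotientAddGroup.mk (v, a) : GLgroup n p) ∈ GLplus n p := by
  have : (v, a) = ∑ i, (v i).toNat • ((Pi.single i 1, 0) : (Fin n → ℤ) × ℤ)
      + a.toNat • ((0, 1) : (Fin n → ℤ) × ℤ) := by
    ext j
    · simp [Prod.fst_sum, Finset.sum_apply, Pi.single_apply, hv]
    · simp [Prod.snd_sum, ha]
  rw [this]
  have e : (QuotientAddGroup.mk (∑ i, (v i).toNat • ((Pi.single i 1, 0) : (Fin n → ℤ) × ℤ)
      + a.toNat • ((0, 1) : (Fin n → ℤ) × ℤ)) : GLgroup n p)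
      = ∑ i, (v i).toNat • GLx n p i + a.toNat • GLc n p := by
    change QuotientAddGroup.mk' (GLrels n p) _ = _
    rw [map_add, map_sum, map_nsmul]
    simp only [map_nsmul]
    rfl
  rw [e]
  refine add_mem (sum_mem fun i _ => nsmul_mem (AddSubmonoid.subset_closure ?_) _)
    (nsmul_mem (AddSubmonoid.subset_closure ?_) _)
  · right; exact ⟨i, rfl⟩
  · left; rfl

theorem GLplus_rep {n : ℕ} {p : Fin n → ℕ} (z : GLgroup n p) (hz : z ∈ GLplus n p) :
    ∃ (v : Fin n → ℤ) (a : ℤ), (∀ i, 0 ≤ v i) ∧ 0 ≤ a ∧ z = QuotientAddGroup.mk (v, a) := by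
  unfold GLplus at hz
  induction hz using AddSubmonoid.closure_induction with
  | mem x hx =>
    rcases hx with hx | ⟨i, rfl⟩
    · rw [Set.mem_singleton_iff] at hx
      subst hx
      exact ⟨0, 1, by simp, by simp, rfl⟩
    · refine ⟨Pi.single i 1, 0, fun j => ?_, le_rfl, rfl⟩
      by_cases h : j = i
      · subst h; simp
      · simp [h]
  | zero => exact ⟨0, 0, by simp, by simp, rfl⟩
  | add x y _ _ hx hy =>
    obtain ⟨v, a, h1, h2, rfl⟩ := hx
    obtain ⟨w, b, h3, h4, rfl⟩ := hy
    exact ⟨v + w, a + b, fun i => add_nonneg (h1 i) (h3 i), add_nonneg h2 h4, rfl⟩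

theorem GLmk_mem_iff {n : ℕ} {p : Fin n → ℕ} (hp : ∀ i, 0 < p i) (v : Fin n → ℤ) (a : ℤ) :
    (QuotientAddGroup.mk (v, a) : GLgroup n p) ∈ GLplus n p ↔ 0 ≤ a + ∑ i, v i / (p i : ℤ) := by
  have hp' : ∀ i, (0 : ℤ) < p i := fun i => by exact_mod_cast hp i
  constructor
  · intro h
    obtain ⟨w, b, hw, hb, e⟩ := GLplus_rep _ h
    obtain ⟨k, h1, h2⟩ := (GLmk_eq _ _ _ _).1 e
    have : ∑ i, w i / (p i : ℤ) = ∑ i, v i / (p i : ℤ) + ∑ i, k i := by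
      rw [← Finset.sum_add_distrib]
      refine Finset.sum_congr rfl fun i _ => ?_
      rw [h1, Int.add_mul_ediv_left _ _ (hp' i).ne']
    have h0 : 0 ≤ ∑ i, w i / (p i : ℤ) :=
      Finset.sum_nonneg fun i _ => Int.ediv_nonneg (hw i) (hp' i).le
    linarith
  · intro h
    have e : (QuotientAddGroup.mk (v, a) : GLgroup n p) =
        QuotientAddGroup.mk (fun i => v i % (p i : ℤ), a + ∑ i, v i / (p i : ℤ)) := by
      rw [GLmk_eq]
      refine ⟨fun i => -(v i / (p i : ℤ)), fun i => ?_, ?_⟩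
      · have := Int.emod_add_mul_ediv (v i) (p i)
        linarith
      · simp
    rw [e]
    exact GLmk_mem _ _ (fun i => Int.emod_nonneg _ (hp' i).ne') h

/-- Normal form map. -/
def GLnf (n : ℕ) (p : Fin n → ℕ) (x : (_ : Fin n → ℕ) × ℕ) : GLgroup n p :=
  QuotientAddGroup.mk (fun i => (x.1 i : ℤ), (x.2 : ℤ))

/-- Support of a vector of exponents. -/
def GLsupp {n : ℕ} (a : Fin n → ℕ) : Finset (Fin n) := Finset.univ.filter fun i => a i ≠ 0

/-- Index set of normal forms in the interval. -/
def GLidx (d n : ℕ) (p : Fin n → ℕ) : Finset ((_ : Fin n → ℕ) × ℕ) :=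
  (Fintype.piFinset fun i => Finset.range (p i)).sigma
    fun a => Finset.range (d + 1 - (GLsupp a).card)

theorem GLnf_le {n : ℕ} {p : Fin n → ℕ} (hp : ∀ i, 0 < p i) (d : ℕ) (a : Fin n → ℕ) (b : ℤ)
    (ha : ∀ i, a i < p i) :
    (GLle n p 0 (QuotientAddGroup.mk (fun i => (a i : ℤ), b)) ∧
      GLle n p (QuotientAddGroup.mk (fun i => (a i : ℤ), b)) ((d : ℤ) • GLc n p)) ↔
      0 ≤ b ∧ b + (GLsupp a).card ≤ d := by
  unfold GLle
  refine and_congr ?_ ?_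
  · rw [sub_zero, GLmk_mem_iff hp]
    have : ∑ i, (a i : ℤ) / (p i : ℤ) = 0 := Finset.sum_eq_zero fun i _ =>
      Int.ediv_eq_zero_of_lt (by positivity) (by exact_mod_cast ha i)
    rw [this, add_zero]
  · have e : (d : ℤ) • GLc n p - QuotientAddGroup.mk (fun i => (a i : ℤ), b) =
        QuotientAddGroup.mk (fun i => -(a i : ℤ), (d : ℤ) - b) := by
      change (QuotientAddGroup.mk ((d : ℤ) • ((0, 1) : (Fin n → ℤ) × ℤ) -
        (fun i => (a i : ℤ), b)) : GLgroup n p) = _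
      congr 1
      ext i <;> simp
    rw [e, GLmk_mem_iff hp]
    have : ∑ i, (-(a i : ℤ)) / (p i : ℤ) = - ((GLsupp a).card : ℤ) := by
      unfold GLsupp
      rw [Finset.card_filter]
      push_cast
      rw [← Finset.sum_neg_distrib]
      refine Finset.sum_congr rfl fun i _ => ?_
      have h1 := ha i
      by_cases h : a i = 0
      · simp [h]
      · rw [if_pos h]
        rw [Int.ediv_eq_iff_of_pos (by exact_mod_cast hp i)]
        constructor <;> push_cast <;> omega
    rw [this]
    constructor <;> intro h <;> linarith

theorem GLnf_image {d n : ℕ} {p : Fin n → ℕ} (hp : ∀ i, 0 < p i) :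
    {z : GLgroup n p | GLle n p 0 z ∧ GLle n p z ((d : ℤ) • GLc n p)} =
      Set.image (GLnf n p) (GLidx d n p : Set ((_ : Fin n → ℕ) × ℕ)) := by
  have hp' : ∀ i, (0 : ℤ) < p i := fun i => by exact_mod_cast hp i
  ext z
  constructor
  · intro hz
    obtain ⟨⟨v, m⟩, rfl⟩ := QuotientAddGroup.mk_surjective z
    have e : (QuotientAddGroup.mk (v, m) : GLgroup n p) =
        QuotientAddGroup.mk (fun i => (((v i % (p i : ℤ)).toNat : ℕ) : ℤ),
          m + ∑ i, v i / (p i : ℤ)) := by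
      rw [GLmk_eq]
      refine ⟨fun i => -(v i / (p i : ℤ)), fun i => ?_, ?_⟩
      · have := Int.emod_add_mul_ediv (v i) (p i)
        rw [Int.toNat_of_nonneg (Int.emod_nonneg _ (hp' i).ne')]
        linarith
      · simp
    have hlt : ∀ i, (v i % (p i : ℤ)).toNat < p i := fun i => by
      have := Int.emod_lt_of_pos (v i) (hp' i)
      have := Int.emod_nonneg (v i) (hp' i).ne'
      omega
    rw [e] at hz ⊢
    generalize m + ∑ i, v i / (p i : ℤ) = b at hz ⊢
    have h := (GLnf_le hp d (fun i => (v i % (p i : ℤ)).toNat) b hlt).1 hz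
    refine ⟨⟨fun i => (v i % (p i : ℤ)).toNat, b.toNat⟩, ?_, ?_⟩
    · simp only [GLidx, Finset.coe_sigma, Set.mem_sigma_iff, Finset.mem_coe,
        Fintype.mem_piFinset, Finset.mem_range]
      exact ⟨hlt, by omega⟩
    · unfold GLnf
      simp only [Int.toNat_of_nonneg h.1]
  · rintro ⟨⟨a, b⟩, hx, rfl⟩
    simp only [GLidx, Finset.coe_sigma, Set.mem_sigma_iff, Finset.mem_coe,
        Fintype.mem_piFinset, Finset.mem_range] at hx
    exact (GLnf_le hp d a b hx.1).2 ⟨by positivity, by omega⟩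

theorem GLnf_inj {d n : ℕ} {p : Fin n → ℕ} :
    Set.InjOn (GLnf n p) (GLidx d n p : Set ((_ : Fin n → ℕ) × ℕ)) := by
  rintro ⟨a, b⟩ hx ⟨a', b'⟩ hy h
  simp only [GLidx, Finset.coe_sigma, Set.mem_sigma_iff, Finset.mem_coe,
        Fintype.mem_piFinset, Finset.mem_range] at hx hy
  obtain ⟨k, h1, h2⟩ := (GLmk_eq _ _ _ _).1 h
  have hk : ∀ i, k i = 0 := fun i => by
    have e := h1 i
    have l1 := hx.1 i
    have l2 := hy.1 i
    simp only at e
    by_contra hne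
    rcases lt_or_gt_of_ne hne with hlt | hgt
    · nlinarith
    · nlinarith
  simp only [hk] at h1 h2
  have ha : a = a' := by
    funext i
    have := h1 i
    simp at this
    exact this.symm
  have hb : b = b' := by simp at h2; exact h2.symm
  rw [ha, hb]

theorem GLidx_card (d n : ℕ) (p : Fin n → ℕ) (hp : ∀ i, 0 < p i) : (GLidx d n p).card =
    ∑ I ∈ Finset.univ.powerset.filter (fun I : Finset (Fin n) => I.card ≤ d),
          (d + 1 - I.card) * ∏ i ∈ I, (p i - 1) := by
  unfold GLidx
  rw [Finset.card_sigma]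
  simp only [Finset.card_range]
  rw [Finset.sum_filter_of_ne (fun I _ h => by
    by_contra hc
    apply h
    rw [show d + 1 - I.card = 0 by omega, zero_mul])]
  rw [← Finset.sum_fiberwise_of_maps_to (g := GLsupp) (t := Finset.univ.powerset)
    (fun a _ => by simp)]
  refine Finset.sum_congr rfl fun I _ => ?_
  rw [Finset.sum_congr rfl (g := fun _ => d + 1 - I.card)
    (fun a ha => by rw [(Finset.mem_filter.1 ha).2])]
  rw [Finset.sum_const, smul_eq_mul, mul_comm]
  congr 1
  have : (Fintype.piFinset fun i => Finset.range (p i)).filter (fun a => GLsupp a = I) =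
      Fintype.piFinset fun i => if i ∈ I then Finset.Ioo 0 (p i) else {0} := by
    ext a
    simp only [Finset.mem_filter, Fintype.mem_piFinset, Finset.mem_range, GLsupp,
      Finset.ext_iff, Finset.mem_univ, true_and]
    rw [← forall_and]
    refine forall_congr' fun i => ?_
    have := hp i
    split_ifs with h
    · simp [h]; omega
    · simp [h]; omega
  rw [this, Fintype.card_piFinset]
  simp only [apply_ite Finset.card, Nat.card_Ioo, Finset.card_singleton]
  rw [Finset.prod_ite_mem]
  simp

/-- The interval `[0, d c⃗]` in `𝕃` is finite of cardinality
`Σ_{I ⊆ {1,…,n}, |I| ≤ d} (d + 1 − |I|) · Π_{i ∈ I} (p_i − 1)`. -/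
theorem card_interval (d n : ℕ) (hd : 1 ≤ d) (p : Fin n → ℕ) (hp : ∀ i, 0 < p i) :
    {z : GLgroup n p | GLle n p 0 z ∧ GLle n p z ((d : ℤ) • GLc n p)}.Finite ∧
      {z : GLgroup n p | GLle n p 0 z ∧ GLle n p z ((d : ℤ) • GLc n p)}.ncard =
        ∑ I ∈ Finset.univ.powerset.filter (fun I : Finset (Fin n) => I.card ≤ d),
          (d + 1 - I.card) * ∏ i ∈ I, (p i - 1) := by
  rw [GLnf_image hp]
  refine ⟨(Finset.finite_toSet _).image _, ?_⟩
  rw [Set.ncard_image_of_injOn GLnf_inj, Set.ncard_coe_finset, GLidx_card d n p hp]
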